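/- arXiv:math/0506281 — 2 statements merged into one kernel-verified Lean document; each statement's English description precedes it below -/
import Mathlib

section
/- Let G be an arbitrary finite simple graph on vertex set V = {v_1,...,v_n}. Then a vector x = (x_1,...,x_n) ∈ R^n belongs to the edge cone R+A of G if and only if x is a solution of the system of linear inequalities: -x_i ≤ 0 for i = 1,...,n, and ∑_{v_i ∈ A} x_i - ∑_{v_i ∈ N(A)} x_i ≤ 0 for every independent set of vertices A ⊆ V. -/
open Finset

/-- The edge vector `e_i + e_j` associated to an edge `{i, j}`. -/
def edgeVector {V : Type*} [DecidableEq V] (i j : V) : V → ℝ :=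
  fun k => (if k = i then 1 else 0) + (if k = j then 1 else 0)

/-- The edge cone of a graph `G`: all nonnegative real linear combinations of the
edge vectors of `G`. -/
def edgeCone {V : Type*} [Fintype V] [DecidableEq V] (G : SimpleGraph V) :
    Set (V → ℝ) :=
  { x | ∃ c : V → V → ℝ, (∀ i j, 0 ≤ c i j) ∧ (∀ i j, ¬ G.Adj i j → c i j = 0) ∧
        x = ∑ i, ∑ j, c i j • edgeVector i j }

/-- The neighbor set `N(A)`: vertices adjacent to at least one vertex of `A`. -/
def nbr {V : Type*} [Fintype V] [DecidableEq V] (G : SimpleGraph V)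
    [DecidableRel G.Adj] (A : Finset V) : Finset V :=
  Finset.univ.filter fun v => ∃ a ∈ A, G.Adj v a

/-- `A` is an independent set of vertices of `G`. -/
def IsIndep {V : Type*} (G : SimpleGraph V) (A : Finset V) : Prop :=
  ∀ a ∈ A, ∀ b ∈ A, ¬ G.Adj a b

/-- `F` is a face of the cone `Q`: `F = Q ∩ {x | ⟪x, a⟫ = 0}` for some `a` with
`Q ⊆ {x | ⟪x, a⟫ ≤ 0}`. -/
def IsFace {V : Type*} [Fintype V] (Q F : Set (V → ℝ)) : Prop :=
  ∃ a : V → ℝ, (∀ x ∈ Q, ∑ i, x i * a i ≤ 0) ∧ F = Q ∩ {x | ∑ i, x i * a i = 0}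

/-- `F` is a facet of the cone `Q`: a face whose linear span has dimension one less
than the dimension of the linear span of `Q`. -/
def IsFacet {V : Type*} [Fintype V] (Q F : Set (V → ℝ)) : Prop :=
  IsFace Q F ∧
    Module.finrank ℝ (Submodule.span ℝ F) = Module.finrank ℝ (Submodule.span ℝ Q) - 1


lemma cone_coord {n : ℕ} (c : Fin n → Fin n → ℝ) (k : Fin n) :
    (∑ i, ∑ j, c i j • edgeVector i j) k = ∑ j, (c k j + c j k) := by
  simp only [Finset.sum_apply, Pi.smul_apply, edgeVector, smul_eq_mul, mul_add,
    Finset.sum_add_distrib]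
  congr 1
  · rw [Finset.sum_eq_single k]
    · simp
    · intro b _ hb
      simp [hb.symm]
    · simp
  · simp

lemma easy_dir {n : ℕ} (G : SimpleGraph (Fin n)) [DecidableRel G.Adj]
    (x : Fin n → ℝ) (hx : x ∈ edgeCone G) :
      (∀ i, -x i ≤ 0) ∧
      ∀ A : Finset (Fin n), IsIndep G A →
        ∑ i ∈ A, x i - ∑ i ∈ nbr G A, x i ≤ 0 := by
  obtain ⟨c, h0, h1, rfl⟩ := hx
  refine ⟨fun i => ?_, fun A _ => ?_⟩
  · rw [cone_coord]
    have : 0 ≤ ∑ j, (c i j + c j i) := Finset.sum_nonneg fun j _ => add_nonneg (h0 _ _) (h0 _ _)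
    linarith
  · simp only [cone_coord]
    have e1 : ∑ k ∈ A, ∑ j, (c k j + c j k) = ∑ k ∈ A, ∑ j ∈ nbr G A, (c k j + c j k) := by
      refine Finset.sum_congr rfl fun k hk => ?_
      symm
      refine Finset.sum_subset (Finset.subset_univ _) fun j _ hj => ?_
      have : ¬ G.Adj j k := by
        intro h
        exact hj (by simp only [nbr, Finset.mem_filter, Finset.mem_univ, true_and]; exact ⟨k, hk, h⟩)
      rw [h1 j k this, h1 k j (fun h => this h.symm), add_zero]
    rw [e1, Finset.sum_comm, sub_nonpos]
    refine Finset.sum_le_sum fun j _ => ?_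
    calc _ = ∑ k ∈ A, (c j k + c k j) := Finset.sum_congr rfl fun k _ => add_comm _ _
      _ ≤ _ := Finset.sum_le_sum_of_subset_of_nonneg (Finset.subset_univ _)
        fun k _ _ => add_nonneg (h0 _ _) (h0 _ _)

lemma cone_closed {n : ℕ} (G : SimpleGraph (Fin n)) : IsClosed (edgeCone G) := by
  rw [← closure_subset_iff_isClosed]
  intro x hx
  let T : (Fin n → Fin n → ℝ) → (Fin n → ℝ) := fun c => ∑ i, ∑ j, c i j • edgeVector i j
  have hT : Continuous T := by fun_prop
  let B : Fin n → Fin n → ℝ := fun i _ => x i + 1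
  let K : Set (Fin n → Fin n → ℝ) := Set.Icc 0 B ∩ {c | ∀ i j, ¬ G.Adj i j → c i j = 0}
  have hK : IsCompact K := by
    refine isCompact_Icc.inter_right ?_
    simp only [Set.ofPred_forall]
    refine isClosed_iInter fun i => isClosed_iInter fun j => isClosed_iInter fun _ => ?_
    exact isClosed_eq (by fun_prop) continuous_const
  let U : Set (Fin n → ℝ) := {z | ∀ k, z k < x k + 1}
  have hU : IsOpen U := by
    simp only [U, Set.ofPred_forall]
    exact isOpen_iInter_of_finite fun k => isOpen_lt (by fun_prop) continuous_const
  have hxU : x ∈ U := fun k => by linarith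
  have h1 : x ∈ closure (U ∩ edgeCone G) := hU.inter_closure ⟨hxU, hx⟩
  have hsub : U ∩ edgeCone G ⊆ T '' K := by
    rintro z ⟨hz, c, h0, hc, rfl⟩
    refine ⟨c, ⟨⟨fun i j => h0 i j, fun i j => ?_⟩, hc⟩, rfl⟩
    have := hz i
    rw [cone_coord] at this
    have h2 : c i j + c j i ≤ ∑ j, (c i j + c j i) :=
      Finset.single_le_sum (f := fun j => c i j + c j i)
        (fun j _ => add_nonneg (h0 _ _) (h0 _ _)) (Finset.mem_univ j)
    have := h0 j i
    show c i j ≤ x i + 1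
    linarith
  have h2 := closure_minimal hsub (hK.image hT).isClosed h1
  obtain ⟨c, ⟨⟨h0, _⟩, hc⟩, rfl⟩ := h2
  exact ⟨c, fun i j => h0 i j, hc, rfl⟩

lemma cone_smul {n : ℕ} (G : SimpleGraph (Fin n)) {x : Fin n → ℝ} (hx : x ∈ edgeCone G)
    {t : ℝ} (ht : 0 ≤ t) : t • x ∈ edgeCone G := by
  obtain ⟨c, h0, h1, rfl⟩ := hx
  refine ⟨fun i j => t * c i j, fun i j => mul_nonneg ht (h0 _ _),
    fun i j h => by simp [h1 i j h], ?_⟩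
  simp only [Finset.smul_sum, smul_smul]

lemma cone_add {n : ℕ} (G : SimpleGraph (Fin n)) {x y : Fin n → ℝ} (hx : x ∈ edgeCone G)
    (hy : y ∈ edgeCone G) : x + y ∈ edgeCone G := by
  obtain ⟨c, h0, h1, rfl⟩ := hx
  obtain ⟨d, h0', h1', rfl⟩ := hy
  refine ⟨fun i j => c i j + d i j, fun i j => add_nonneg (h0 _ _) (h0' _ _),
    fun i j h => by simp [h1 i j h, h1' i j h], ?_⟩
  simp only [add_smul, Finset.sum_add_distrib]

lemma cone_edge {n : ℕ} (G : SimpleGraph (Fin n)) {a b : Fin n} (h : G.Adj a b) :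
    (Pi.single a 1 + Pi.single b 1 : Fin n → ℝ) ∈ edgeCone G := by
  refine ⟨fun i j => if i = a ∧ j = b then 1 else 0, fun i j => ?_, fun i j hij => ?_, ?_⟩
  · positivity
  · refine if_neg ?_
    rintro ⟨rfl, rfl⟩
    exact hij h
  · rw [Finset.sum_eq_single a, Finset.sum_eq_single b]
    · ext k
      simp [edgeVector, Pi.single_apply]
    · intro j _ hj
      simp [hj]
    · simp
    · intro i _ hi
      simp [hi]
    · simp

lemma dual_nonneg {n : ℕ} (G : SimpleGraph (Fin n)) [DecidableRel G.Adj]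
    (x : Fin n → ℝ) (hx : ∀ i, 0 ≤ x i)
    (hA : ∀ A : Finset (Fin n), IsIndep G A → ∑ i ∈ A, x i ≤ ∑ i ∈ nbr G A, x i) (m : ℕ) :
    ∀ y : Fin n → ℝ, (∀ i j, G.Adj i j → 0 ≤ y i + y j) →
      (Finset.univ.filter fun i => y i < 0).card = m → 0 ≤ ∑ i, x i * y i := by
  induction m using Nat.strong_induction_on with
  | _ m ih =>
  intro y hy hm
  set A := Finset.univ.filter fun i => y i < 0 with hAdef
  have memA : ∀ i, i ∈ A ↔ y i < 0 := fun i => by simp [hAdef]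
  rcases A.eq_empty_or_nonempty with he | hne
  · refine Finset.sum_nonneg fun i _ => mul_nonneg (hx i) ?_
    by_contra! h
    have := (memA i).2 h
    simp [he] at this
  obtain ⟨a, ha, hmax⟩ := A.exists_max_image y hne
  have ha0 := (memA a).1 ha
  have hind : IsIndep G A := by
    intro i hi j hj hij
    have := hy i j hij
    have := (memA i).1 hi
    have := (memA j).1 hj
    linarith
  have memN : ∀ j, j ∈ nbr G A ↔ ∃ i ∈ A, G.Adj j i := fun j => by simp [nbr]
  have hN : ∀ j ∈ nbr G A, -y a ≤ y j := by
    intro j hj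
    obtain ⟨i, hi, hij⟩ := (memN j).1 hj
    have := hy j i hij
    have := hmax i hi
    linarith
  have hNA : ∀ j ∈ nbr G A, j ∉ A := fun j hj hjA => by
    have := hN j hj
    have := (memA j).1 hjA
    linarith
  let z : Fin n → ℝ := fun i =>
    y i + (if i ∈ A then -y a else 0) + (if i ∈ nbr G A then y a else 0)
  have zA : ∀ i ∈ A, z i = y i - y a := fun i hi => by
    have : i ∉ nbr G A := fun h => hNA i h hi
    simp only [z, hi, this, if_true, if_false]; ring
  have zN : ∀ i ∈ nbr G A, z i = y i + y a := fun i hi => by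
    simp only [z, hi, hNA i hi, if_true, if_false]; ring
  have znA : ∀ i, i ∉ A → 0 ≤ z i := by
    intro i hi
    by_cases h : i ∈ nbr G A
    · rw [zN i h]
      have := hN i h
      linarith
    · have : ¬ y i < 0 := fun h' => hi ((memA i).2 h')
      simp only [z, hi, h, if_false]
      linarith
  have hz : ∀ i j, G.Adj i j → 0 ≤ z i + z j := by
    intro i j hij
    have := hy i j hij
    by_cases hi : i ∈ A
    · have hj := (memN j).2 ⟨i, hi, hij.symm⟩
      rw [zA i hi, zN j hj]; linarith
    · by_cases hj : j ∈ A
      · have hi := (memN i).2 ⟨j, hj, hij⟩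
        rw [zA j hj, zN i hi]; linarith
      · exact add_nonneg (znA i hi) (znA j hj)
  have hcard : (Finset.univ.filter fun i => z i < 0).card < m := by
    rw [← hm]
    refine Finset.card_lt_card ?_
    rw [Finset.ssubset_iff_of_subset]
    · refine ⟨a, ha, ?_⟩
      simp [zA a ha]
    · intro i hi
      by_contra h
      have := znA i h
      have h2 : z i < 0 := by simpa using hi
      linarith
  have key := ih _ hcard z hz rfl
  have e : ∑ i, x i * z i = ∑ i, x i * y i - y a * (∑ i ∈ A, x i - ∑ i ∈ nbr G A, x i) := by
    simp only [z, mul_add, Finset.sum_add_distrib, mul_ite, mul_zero, Finset.sum_ite_mem,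
      Finset.univ_inter, ← Finset.sum_mul]
    ring
  have := hA A hind
  rw [e] at key
  nlinarith

/-- For an arbitrary graph `G`, a vector `x ∈ ℝⁿ` belongs to the edge cone of `G` if and
only if `-x_i ≤ 0` for all `i` and `∑_{v_i ∈ A} x_i - ∑_{v_i ∈ N(A)} x_i ≤ 0` for every
independent set of vertices `A` of `G`. -/
theorem stmt4 {n : ℕ} (G : SimpleGraph (Fin n)) [DecidableRel G.Adj]
    (x : Fin n → ℝ) :
    x ∈ edgeCone G ↔
      (∀ i, -x i ≤ 0) ∧
      ∀ A : Finset (Fin n), IsIndep G A →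
        ∑ i ∈ A, x i - ∑ i ∈ nbr G A, x i ≤ 0 := by
  refine ⟨easy_dir G x, fun ⟨h0, hA⟩ => ?_⟩
  by_contra hx
  have hconv : Convex ℝ (edgeCone G) := fun p hp q hq s t hs ht _ =>
    cone_add G (cone_smul G hp hs) (cone_smul G hq ht)
  obtain ⟨f, u, hfx, hf⟩ := geometric_hahn_banach_point_closed hconv (cone_closed G) hx
  have hzero : (0 : Fin n → ℝ) ∈ edgeCone G :=
    ⟨0, fun _ _ => le_rfl, fun _ _ _ => rfl, by simp⟩
  have hu : u < 0 := by simpa using hf 0 hzero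
  have hpos : ∀ b ∈ edgeCone G, 0 ≤ f b := by
    intro b hb
    by_contra! h
    have := hf _ (cone_smul G hb (t := u / f b) (div_nonneg_of_nonpos hu.le h.le))
    rw [map_smul, smul_eq_mul, div_mul_cancel₀ _ h.ne] at this
    exact lt_irrefl _ this
  have hrep : f x = ∑ i, x i * f (Pi.single i 1) := by
    conv_lhs => rw [pi_eq_sum_univ' x]
    simp [map_sum, Pi.single_apply, Pi.single, Function.update]
  have := dual_nonneg G x (fun i => by linarith [h0 i])
    (fun A h => by linarith [hA A h]) _ (fun i => f (Pi.single i 1))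
    (fun i j hij => by
      have := hpos _ (cone_edge G hij)
      rwa [map_add] at this) rfl
  rw [← hrep] at this
  linarith
end

section
/- Let G be a connected bipartite finite simple graph on vertex set V = {v_1,...,v_n} with bipartition (V_1, V_2), let A be a proper subset of V_1, and suppose F = H_A ∩ R+A is a facet of the edge cone. If N(A) is a proper subset of V_2, then F = H_{V_2 \ N(A)} ∩ R+A and N(V_2 \ N(A)) = V_1 \ A. -/
open Finset

lemma sum_edgeVector {V : Type*} [DecidableEq V] (S : Finset V) (i j : V) :
    ∑ k ∈ S, edgeVector i j k = (if i ∈ S then 1 else 0) + (if j ∈ S then 1 else 0) := by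
  simp [edgeVector, Finset.sum_add_distrib]

lemma sum_comb {V : Type*} [Fintype V] [DecidableEq V] (S : Finset V) (c : V → V → ℝ) :
    ∑ k ∈ S, (∑ i, ∑ j, c i j • edgeVector i j) k =
      ∑ i, ∑ j, c i j * ((if i ∈ S then 1 else 0) + (if j ∈ S then 1 else 0)) := by
  simp only [Finset.sum_apply, Pi.smul_apply, smul_eq_mul]
  rw [Finset.sum_comm]
  refine Finset.sum_congr rfl fun i _ => ?_
  rw [Finset.sum_comm]
  refine Finset.sum_congr rfl fun j _ => ?_
  rw [← Finset.mul_sum, sum_edgeVector]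

lemma edgeVector_mem {V : Type*} [Fintype V] [DecidableEq V] (G : SimpleGraph V) {i j : V}
    (h : G.Adj i j) : edgeVector i j ∈ edgeCone G := by
  refine ⟨fun a b => if a = i ∧ b = j then 1 else 0, ?_, ?_, ?_⟩
  · intro a b; dsimp only; split_ifs <;> norm_num
  · intro a b hab
    dsimp only
    rw [if_neg]
    rintro ⟨rfl, rfl⟩
    exact hab h
  · rw [Finset.sum_eq_single i, Finset.sum_eq_single j]
    · simp
    · intro b _ hb; simp [hb]
    · simp
    · intro b _ hb; simp [hb]
    · simp

/-- For a connected bipartite graph `G` with bipartition `(V₁, V₂)`, a proper subset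
`A ⊊ V₁` with `F = H_A ∩ ℝ₊𝒜` a facet and `N(A) ⊊ V₂`: then
`F = H_{V₂ \ N(A)} ∩ ℝ₊𝒜` and `N(V₂ \ N(A)) = V₁ \ A`. -/
theorem stmt10 {n : ℕ} (G : SimpleGraph (Fin n)) [DecidableRel G.Adj]
    (hG : G.Connected)
    (V₁ V₂ : Finset (Fin n)) (hdisj : Disjoint V₁ V₂)
    (hunion : V₁ ∪ V₂ = Finset.univ)
    (hbip : ∀ i j, G.Adj i j → (i ∈ V₁ ∧ j ∈ V₂) ∨ (i ∈ V₂ ∧ j ∈ V₁))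
    (A : Finset (Fin n)) (hAsub : A ⊆ V₁) (hAne : A ≠ V₁)
    (hfacet : IsFacet (edgeCone G)
      ({x : Fin n → ℝ | ∑ i ∈ A, x i = ∑ i ∈ nbr G A, x i} ∩ edgeCone G))
    (hNA : nbr G A ⊂ V₂) :
    {x : Fin n → ℝ | ∑ i ∈ A, x i = ∑ i ∈ nbr G A, x i} ∩ edgeCone G =
      {x : Fin n → ℝ | ∑ i ∈ V₂ \ nbr G A, x i =
          ∑ i ∈ nbr G (V₂ \ nbr G A), x i} ∩ edgeCone G ∧
    nbr G (V₂ \ nbr G A) = V₁ \ A := by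
  classical
  have hmem : ∀ v, v ∈ V₁ ∨ v ∈ V₂ := fun v => by
    have : v ∈ V₁ ∪ V₂ := by rw [hunion]; exact Finset.mem_univ v
    simpa using this
  have hnot : ∀ v, v ∈ V₁ → v ∈ V₂ → False := fun v h1 h2 =>
    (Finset.disjoint_left.mp hdisj h1 h2)
  have hN : ∀ S v, v ∈ nbr G S ↔ ∃ a ∈ S, G.Adj v a := fun S v => by simp [nbr]
  obtain ⟨hNsub, hNne⟩ := Finset.ssubset_iff_subset_ne.mp hNA
  obtain ⟨b₀, hb₀2, hb₀N⟩ := Finset.exists_of_ssubset hNA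
  have key : nbr G (V₂ \ nbr G A) = V₁ \ A := by
    apply Finset.Subset.antisymm
    · intro v hv
      obtain ⟨b, hb, hvb⟩ := (hN _ _).1 hv
      rw [Finset.mem_sdiff] at hb ⊢
      refine ⟨?_, fun hvA => hb.2 ((hN _ _).2 ⟨v, hvA, hvb.symm⟩)⟩
      rcases hbip _ _ hvb with h | h
      · exact h.1
      · exact (hnot _ h.2 hb.1).elim
    · intro u hu
      rw [Finset.mem_sdiff] at hu
      obtain ⟨hu1, huA⟩ := hu
      by_contra hcon
      have huN : ∀ w, G.Adj u w → w ∈ nbr G A := by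
        intro w hw
        by_contra hwN
        refine hcon ((hN _ _).2 ⟨w, ?_, hw⟩)
        rw [Finset.mem_sdiff]
        refine ⟨?_, hwN⟩
        rcases hbip _ _ hw with h | h
        · exact h.2
        · exact (hnot _ hu1 h.1).elim
      have huNA : u ∉ nbr G A := fun h => hnot _ hu1 (hNsub h)
      -- weights of edges
      have hwt : ∀ i j, G.Adj i j →
          (0:ℝ) ≤ ((if i ∈ nbr G A then 1 else 0) + (if j ∈ nbr G A then 1 else 0))
            - ((if i ∈ A then 1 else 0) + (if j ∈ A then 1 else 0)) := by
        intro i j hij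
        have h1 : i ∈ A → j ∈ nbr G A := fun h => (hN _ _).2 ⟨i, h, hij.symm⟩
        have h2 : j ∈ A → i ∈ nbr G A := fun h => (hN _ _).2 ⟨j, h, hij⟩
        clear * - h1 h2
        split_ifs <;> first | (norm_num; done) | (exfalso; tauto)
      obtain ⟨_, hfin⟩ := hfacet
      set F := {x : Fin n → ℝ | ∑ i ∈ A, x i = ∑ i ∈ nbr G A, x i} ∩ edgeCone G with hF
      have hFu : ∀ x ∈ F, x u = 0 := by
        rintro x ⟨hx, c, hc0, hcG, rfl⟩
        simp only [Set.mem_setOf_eq] at hx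
        rw [sum_comb, sum_comb, eq_comm, ← sub_eq_zero, ← Finset.sum_sub_distrib] at hx
        simp only [← Finset.sum_sub_distrib, ← mul_sub] at hx
        have hnn : ∀ i j, 0 ≤ c i j *
            (((if i ∈ nbr G A then 1 else 0) + (if j ∈ nbr G A then 1 else 0))
            - ((if i ∈ A then 1 else 0) + (if j ∈ A then 1 else 0)) : ℝ) := by
          intro i j
          by_cases h : G.Adj i j
          · exact mul_nonneg (hc0 i j) (hwt i j h)
          · rw [hcG i j h, zero_mul]
        have hz : ∀ i j, c i j *
            (((if i ∈ nbr G A then 1 else 0) + (if j ∈ nbr G A then 1 else 0))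
            - ((if i ∈ A then 1 else 0) + (if j ∈ A then 1 else 0)) : ℝ) = 0 := by
          intro i j
          have h1 := (Finset.sum_eq_zero_iff_of_nonneg
            (fun i _ => Finset.sum_nonneg fun j _ => hnn i j)).1 hx i (Finset.mem_univ i)
          exact (Finset.sum_eq_zero_iff_of_nonneg (fun j _ => hnn i j)).1 h1 j (Finset.mem_univ j)
        have hs := sum_comb {u} c
        rw [Finset.sum_singleton] at hs
        rw [hs]
        refine Finset.sum_eq_zero fun i _ => Finset.sum_eq_zero fun j _ => ?_
        by_cases hij : G.Adj i j
        · by_cases hiu : i = u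
          · subst hiu
            have hjN := huN j hij
            have hjA : j ∉ A := fun h => hnot _ (hAsub h) (hNsub hjN)
            have := hz i j
            simp [huNA, huA, hjN, hjA] at this
            simp [this]
          · by_cases hju : j = u
            · subst hju
              have hjN := huN i hij.symm
              have hjA : i ∉ A := fun h => hnot _ (hAsub h) (hNsub hjN)
              have := hz i j
              simp [huNA, huA, hjN, hjA] at this
              simp [this]
            · simp [hiu, hju]
        · simp [hcG i j hij]
      have hub : u ≠ b₀ := fun h => hnot u hu1 (h ▸ hb₀2)
      obtain ⟨w, hw⟩ : ∃ w, G.Adj u w := by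
        obtain ⟨p⟩ := hG.preconnected u b₀
        cases p with
        | nil => exact (hub rfl).elim
        | cons h _ => exact ⟨_, h⟩
      let K : Submodule ℝ (Fin n → ℝ) :=
        Submodule.span ℝ (edgeCone G) ⊓ LinearMap.ker (LinearMap.proj u : (Fin n → ℝ) →ₗ[ℝ] ℝ)
      have hFK : Submodule.span ℝ F ≤ K := by
        rw [Submodule.span_le]
        intro x hx
        exact ⟨Submodule.subset_span hx.2, hFu x hx⟩
      have hKlt : K < Submodule.span ℝ (edgeCone G) := by
        refine lt_of_le_of_ne inf_le_left fun h => ?_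
        have h1 : edgeVector u w ∈ K := h ▸ Submodule.subset_span (edgeVector_mem G hw)
        have h2 : edgeVector u w u = 0 := h1.2
        simp [edgeVector, hw.ne] at h2
      have hrank := Submodule.finrank_lt_finrank_of_lt hKlt
      have hEq : Submodule.span ℝ F = K :=
        Submodule.eq_of_le_of_finrank_le hFK (by omega)
      let f : (Fin n → ℝ) →ₗ[ℝ] ℝ :=
        (∑ i ∈ A, LinearMap.proj i) - ∑ i ∈ nbr G A, LinearMap.proj i
      have hFf : Submodule.span ℝ F ≤ LinearMap.ker f := by
        rw [Submodule.span_le]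
        intro x hx
        have := hx.1
        simp only [Set.mem_setOf_eq] at this
        simp [f, this]
      have hedge : ∀ i j, G.Adj i j → i ≠ u → j ≠ u → i ∈ nbr G A → j ∈ A := by
        intro i j hij hi hj hiN
        have h1 : edgeVector i j ∈ K := by
          refine ⟨Submodule.subset_span (edgeVector_mem G hij), ?_⟩
          simp [edgeVector, hi.symm, hj.symm]
        have h2 := hFf (hEq ▸ h1)
        have h3 : ∑ k ∈ A, edgeVector i j k - ∑ k ∈ nbr G A, edgeVector i j k = 0 := by
          simpa [f] using h2
        rw [sum_edgeVector, sum_edgeVector] at h3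
        have hiA : i ∉ A := fun h => hnot _ (hAsub h) (hNsub hiN)
        by_contra hjA
        simp only [hiA, hjA, hiN, if_true, if_false] at h3
        split_ifs at h3 <;> norm_num at h3
      have hclosed : ∀ i j, G.Adj i j → (i ∈ A ∨ i ∈ nbr G A ∨ i = u) →
          (j ∈ A ∨ j ∈ nbr G A ∨ j = u) := by
        rintro i j hij (h | h | h)
        · exact Or.inr (Or.inl ((hN _ _).2 ⟨i, h, hij.symm⟩))
        · by_cases hj : j = u
          · exact Or.inr (Or.inr hj)
          · exact Or.inl (hedge i j hij (fun e => huNA (e ▸ h)) hj h)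
        · subst h
          exact Or.inr (Or.inl (huN j hij))
      have hreach : ∀ i j, G.Walk i j → (i ∈ A ∨ i ∈ nbr G A ∨ i = u) →
          (j ∈ A ∨ j ∈ nbr G A ∨ j = u) := by
        intro i j p
        induction p with
        | nil => exact id
        | cons h _ ih => exact fun hi => ih (hclosed _ _ h hi)
      obtain ⟨p⟩ := hG.preconnected u b₀
      rcases hreach u b₀ p (Or.inr (Or.inr rfl)) with h | h | h
      · exact hnot _ (hAsub h) hb₀2
      · exact hb₀N h
      · exact hub h.symm
  refine ⟨?_, key⟩
  rw [key]
  have hbal : ∀ x ∈ edgeCone G, ∑ i ∈ V₁, x i = ∑ i ∈ V₂, x i := by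
    rintro x ⟨c, _, hcG, rfl⟩
    rw [sum_comb, sum_comb]
    refine Finset.sum_congr rfl fun i _ => Finset.sum_congr rfl fun j _ => ?_
    by_cases hij : G.Adj i j
    · rcases hbip i j hij with ⟨h1, h2⟩ | ⟨h1, h2⟩
      · have h3 : i ∉ V₂ := fun h => hnot _ h1 h
        have h4 : j ∉ V₁ := fun h => hnot _ h h2
        simp [h1, h2, h3, h4]
      · have h3 : i ∉ V₁ := fun h => hnot _ h h1
        have h4 : j ∉ V₂ := fun h => hnot _ h2 h
        simp [h1, h2, h3, h4]
    · simp [hcG i j hij]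
  ext x
  simp only [Set.mem_inter_iff, Set.mem_setOf_eq]
  refine and_congr_left fun hx => ?_
  have h0 := hbal x hx
  have h1 := Finset.sum_sdiff (f := x) hAsub
  have h2 := Finset.sum_sdiff (f := x) hNsub
  constructor <;> intro h <;> linarith
end
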